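/- arXiv:1906.02372 — 2 statements merged into one kernel-verified Lean document; each statement's English description precedes it below -/
import Mathlib

section
/- Let T be a rooted, countably infinite, locally finite tree which is homogeneous by sectors at the level N. Then the backward shift B maps 𝓛₀ into 𝓛₀: if f ∈ 𝓛₀ then Bf ∈ 𝓛₀. -/
/-!
Summing `f w = f v + f' w` over the children `w` of `v` gives
`(Bf)(v) = ∑ f' w + γ(v) f(v)` (`LipTree.bshift_eq`). Below level `N` a vertex `v` and its parent
have the same number `γ` of children, because they lie in the sector of the same vertex of level
`N`; hence the values of `f` itself only enter through `f'(v)`: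
`(Bf)'(v) = ∑_{w child of v} f' w - ∑_{u child of par v} f' u + γ f'(v)`
(`LipTree.deriv_bshift_eq`). Only finitely many vertices have level at most `N`, so `γ` is bounded
by some `G` on the whole tree, and `|(Bf)'(v)|` is at most `3 G` times the supremum of `|f'|` over
the levels `≥ |v|`. This gives `(Bf)' → 0`. Since each level is finite, a function whose derivative
vanishes at infinity has bounded derivative, so `Bf ∈ 𝓛₀`.
-/

open scoped ENNReal NNReal

/-- A rooted, countably infinite, locally finite tree, encoded via its parent
function and depth function. Every non-root vertex `v` has a parent `par v`
one level closer to the root; iterating the parent function from any vertex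
eventually reaches the root (this is forced by the depth function decreasing). -/
structure LipTree where
  V : Type
  countable : Countable V
  infinite : Infinite V
  root : V
  par : V → V
  par_root : par root = root
  depth : V → ℕ
  depth_root : depth root = 0
  depth_par : ∀ v, v ≠ root → depth v = depth (par v) + 1
  locFin : ∀ v : V, {w : V | w ≠ root ∧ par w = v}.Finite

namespace LipTree

variable (T : LipTree)

/-- The set of children of a vertex. -/
def children (v : T.V) : Set T.V := {w | w ≠ T.root ∧ T.par w = v}

/-- `γ(v)`: the number of children of `v`. -/
noncomputable def gamma (v : T.V) : ℕ := (T.locFin v).toFinset.card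

open Classical in
/-- `f'`, the "derivative" of `f` : `f'(o) = f(o)`, `f'(v) = f(v) - f(par v)` otherwise. -/
noncomputable def deriv (f : T.V → ℂ) : T.V → ℂ :=
  fun v => if v = T.root then f v else f v - f (T.par v)

/-- `‖f‖ = sup_{v} |f'(v)|`, valued in `[0,∞]`. -/
noncomputable def lnorm (f : T.V → ℂ) : ℝ≥0∞ := ⨆ v, (‖T.deriv f v‖₊ : ℝ≥0∞)

/-- The Lipschitz space `𝓛`. -/
def Lip : Set (T.V → ℂ) := {f | T.lnorm f < ⊤}

/-- The little Lipschitz space `𝓛₀`: members of `𝓛` with `f'(v) → 0` as `|v| → ∞`. -/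
def Lip0 : Set (T.V → ℂ) :=
  {f | T.lnorm f < ⊤ ∧
    Filter.Tendsto (T.deriv f) (Filter.comap T.depth Filter.atTop) (nhds 0)}

open Classical in
/-- The forward shift `S`. -/
noncomputable def fshift (f : T.V → ℂ) : T.V → ℂ :=
  fun v => if v = T.root then 0 else f (T.par v)

/-- The backward shift `B`: `(Bf)(v) = Σ_{w child of v} f(w)`. -/
noncomputable def bshift (f : T.V → ℂ) : T.V → ℂ :=
  fun v => ∑ w ∈ (T.locFin v).toFinset, f w

/-- `T` is leafless: every vertex has a child. -/
def Leafless : Prop := ∀ v : T.V, (T.children v).Nonempty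

/-- The sector (subtree) determined by `v`: `v` together with all its descendants. -/
def sector (v : T.V) : Set T.V := {w | ∃ n : ℕ, T.par^[n] w = v}

/-- `T` is homogeneous by sectors at level `N`. -/
def HomBySectors (N : ℕ) : Prop :=
  ∀ v : T.V, T.depth v = N → ∀ w ∈ T.sector v, T.gamma w = T.gamma v

/-- `T` is homogeneous of order `γ`. -/
def Homogeneous (γ : ℕ) : Prop := ∀ v : T.V, T.gamma v = γ

/-- The operator norm of `Bⁿ` on `𝓛`: `sup { ‖Bⁿ f‖ : ‖f‖ ≤ 1 }`. -/
noncomputable def opNormBpow (n : ℕ) : ℝ≥0∞ :=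
  ⨆ f ∈ {f : T.V → ℂ | T.lnorm f ≤ 1}, T.lnorm (T.bshift^[n] f)

/-- The operator norm of `B` on `𝓛`: `sup { ‖B f‖ : ‖f‖ ≤ 1 }`. -/
noncomputable def opNormB : ℝ≥0∞ :=
  ⨆ f ∈ {f : T.V → ℂ | T.lnorm f ≤ 1}, T.lnorm (T.bshift f)

/-- The quantity `Λ = sup_{v ≠ o} (γ(v) + γ(par v) - 1 + |γ(v) - 1| + |γ(v) - γ(par v)|·|v|)`. -/
noncomputable def Lambda : ℝ≥0∞ :=
  ⨆ v ∈ {v : T.V | v ≠ T.root},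
    ((T.gamma v + T.gamma (T.par v) - 1
      + ((T.gamma v : ℤ) - 1).natAbs
      + ((T.gamma v : ℤ) - (T.gamma (T.par v) : ℤ)).natAbs * T.depth v : ℕ) : ℝ≥0∞)

/-- An operator `A` on `𝓛₀` is hypercyclic if some orbit `{Aⁿ f}` is dense in `𝓛₀`. -/
def Hypercyclic (A : (T.V → ℂ) → (T.V → ℂ)) : Prop :=
  ∃ f ∈ T.Lip0, ∀ g ∈ T.Lip0, ∀ ε : ℝ≥0∞, 0 < ε →
    ∃ n : ℕ, T.lnorm (A^[n] f - g) < ε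

end LipTree

namespace LipTree

variable (T : LipTree)

theorem mem_locFin {v w : T.V} : w ∈ (T.locFin v).toFinset ↔ w ≠ T.root ∧ T.par w = v := by
  simp

theorem finite_depth_le (n : ℕ) : {v : T.V | T.depth v ≤ n}.Finite := by
  induction n with
  | zero =>
    refine (Set.finite_singleton T.root).subset fun v hv => ?_
    by_contra h
    have := T.depth_par v h
    simp only [Set.mem_ofPred_eq] at hv
    omega
  | succ n ih =>
    refine ((Set.finite_singleton T.root).union (ih.biUnion fun v _ => T.locFin v)).subset
      fun v hv => ?_
    by_cases h : v = T.root
    · exact Or.inl h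
    · have := T.depth_par v h
      simp only [Set.mem_ofPred_eq] at hv
      refine Or.inr (Set.mem_biUnion (x := T.par v) ?_ ⟨h, rfl⟩)
      simp only [Set.mem_ofPred_eq]
      omega

theorem ne_root_of_depth_pos {v : T.V} (h : 0 < T.depth v) : v ≠ T.root := by
  rintro rfl
  rw [T.depth_root] at h
  omega

theorem depth_iterate_par (n : ℕ) (v : T.V) (h : n ≤ T.depth v) :
    T.depth (T.par^[n] v) = T.depth v - n := by
  induction n generalizing v with
  | zero => rfl
  | succ n ih =>
    have := T.depth_par v (T.ne_root_of_depth_pos (by omega))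
    rw [Function.iterate_succ_apply, ih _ (by omega)]
    omega

theorem gamma_eq_ancestor {T : LipTree} {N : ℕ} (hN : T.HomBySectors N) (v : T.V)
    (h : N ≤ T.depth v) : T.gamma v = T.gamma (T.par^[T.depth v - N] v) :=
  hN _ (by rw [T.depth_iterate_par _ _ (by omega)]; omega) v ⟨_, rfl⟩

theorem gamma_par {T : LipTree} {N : ℕ} (hN : T.HomBySectors N) (v : T.V)
    (h : N < T.depth v) : T.gamma (T.par v) = T.gamma v := by
  have hd := T.depth_par v (T.ne_root_of_depth_pos (by omega))
  rw [gamma_eq_ancestor hN v h.le, gamma_eq_ancestor hN (T.par v) (by omega),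
    ← Function.iterate_succ_apply]
  congr 3
  omega

theorem exists_gamma_le {T : LipTree} {N : ℕ} (hN : T.HomBySectors N) :
    ∃ G : ℕ, ∀ v, T.gamma v ≤ G := by
  obtain ⟨G, hG⟩ := ((T.finite_depth_le N).image T.gamma).bddAbove
  refine ⟨G, fun v => ?_⟩
  rcases le_total (T.depth v) N with h | h
  · exact hG ⟨v, h, rfl⟩
  · rw [gamma_eq_ancestor hN v h]
    refine hG ⟨_, ?_, rfl⟩
    simp only [Set.mem_ofPred_eq]
    rw [T.depth_iterate_par _ _ (by omega)]
    omega

theorem bshift_eq (f : T.V → ℂ) (v : T.V) :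
    T.bshift f v = ∑ w ∈ (T.locFin v).toFinset, T.deriv f w + T.gamma v * f v := by
  have : ∀ w ∈ (T.locFin v).toFinset, f w = T.deriv f w + f v := by
    intro w hw
    obtain ⟨h, rfl⟩ := T.mem_locFin.1 hw
    simp [deriv, h]
  rw [bshift, Finset.sum_congr rfl this, Finset.sum_add_distrib, Finset.sum_const, nsmul_eq_mul,
    gamma]

/-- Where `γ(par v) = γ(v)`, the terms of `(Bf)'(v)` involving values of `f` combine into
`γ(v) f'(v)`. -/
theorem deriv_bshift_eq {T : LipTree} {N : ℕ} (hN : T.HomBySectors N) (f : T.V → ℂ) (v : T.V)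
    (h : N < T.depth v) :
    T.deriv (T.bshift f) v = ∑ w ∈ (T.locFin v).toFinset, T.deriv f w
      - ∑ u ∈ (T.locFin (T.par v)).toFinset, T.deriv f u + T.gamma v * T.deriv f v := by
  have hv := T.ne_root_of_depth_pos (by omega : 0 < T.depth v)
  have h1 : T.deriv (T.bshift f) v = T.bshift f v - T.bshift f (T.par v) := by simp [deriv, hv]
  have h2 : T.deriv f v = f v - f (T.par v) := by simp [deriv, hv]
  rw [h1, bshift_eq, bshift_eq, gamma_par hN v h, h2]
  ring

theorem norm_sum_deriv_le (f : T.V → ℂ) (v : T.V) {G : ℕ} (hG : T.gamma v ≤ G) {δ : ℝ}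
    (hδ : 0 ≤ δ) (h : ∀ w, T.depth v < T.depth w → ‖T.deriv f w‖ ≤ δ) :
    ‖∑ w ∈ (T.locFin v).toFinset, T.deriv f w‖ ≤ G * δ := by
  have : ‖∑ w ∈ (T.locFin v).toFinset, T.deriv f w‖ ≤ T.gamma v * δ := by
    rw [gamma, ← nsmul_eq_mul]
    refine norm_sum_le_of_le _ (fun w hw => h w ?_) |>.trans (by simp)
    obtain ⟨hr, rfl⟩ := T.mem_locFin.1 hw
    have := T.depth_par w hr
    omega
  exact this.trans (by gcongr)

theorem tendsto_depth_iff (g : T.V → ℂ) :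
    Filter.Tendsto g (Filter.comap T.depth Filter.atTop) (nhds 0) ↔
      ∀ ε > 0, ∃ M : ℕ, ∀ v, M ≤ T.depth v → ‖g v‖ < ε := by
  rw [((Filter.atTop_basis (α := ℕ)).comap T.depth).tendsto_iff Metric.nhds_basis_ball]
  simp

theorem lnorm_lt_top_of_tendsto (f : T.V → ℂ)
    (h : Filter.Tendsto (T.deriv f) (Filter.comap T.depth Filter.atTop) (nhds 0)) :
    T.lnorm f < ⊤ := by
  obtain ⟨M, hM⟩ := (T.tendsto_depth_iff _).1 h 1 one_pos
  obtain ⟨C, hC⟩ := ((T.finite_depth_le M).image fun v => ‖T.deriv f v‖₊).bddAbove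
  refine lt_of_le_of_lt (iSup_le fun v => ?_) (ENNReal.coe_lt_top (r := max C 1))
  rw [ENNReal.coe_le_coe]
  rcases le_total (T.depth v) M with hv | hv
  · exact le_max_of_le_left (hC ⟨v, hv, rfl⟩)
  · exact le_max_of_le_right (by exact_mod_cast (hM v hv).le)

end LipTree

/-- If `T` is homogeneous by sectors at level `N`, then `B` maps `𝓛₀`
into `𝓛₀`. -/
theorem bshift_maps_lip0_of_homBySectors (T : LipTree) (N : ℕ) (hN : T.HomBySectors N)
    (f : T.V → ℂ) (hf : f ∈ T.Lip0) : T.bshift f ∈ T.Lip0 := by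
  suffices h : Filter.Tendsto (T.deriv (T.bshift f)) (Filter.comap T.depth Filter.atTop)
      (nhds 0) from ⟨T.lnorm_lt_top_of_tendsto _ h, h⟩
  obtain ⟨G, hG⟩ := LipTree.exists_gamma_le hN
  rw [T.tendsto_depth_iff]
  intro ε hε
  -- `3 * G + 1` instead of `3 * G` keeps `δ` well defined when `G = 0` and the bound strict.
  set δ : ℝ := ε / (3 * G + 1) with hδ
  have hδ0 : 0 < δ := by positivity
  have hδε : (3 * G + 1) * δ = ε := by rw [hδ]; field_simp
  obtain ⟨M, hM⟩ := (T.tendsto_depth_iff _).1 hf.2 δ hδ0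
  refine ⟨max M (N + 1), fun v hv => ?_⟩
  have hMv : M ≤ T.depth v := (le_max_left _ _).trans hv
  have hNv : N < T.depth v := (le_max_right _ _).trans hv
  have hd := T.depth_par v (T.ne_root_of_depth_pos (by omega))
  have h1 := T.norm_sum_deriv_le f v (hG v) hδ0.le fun w hw => (hM w (by omega)).le
  have h2 := T.norm_sum_deriv_le f (T.par v) (hG _) hδ0.le fun w hw => (hM w (by omega)).le
  have h3 : ‖(T.gamma v : ℂ) * T.deriv f v‖ ≤ G * δ := by
    rw [norm_mul, Complex.norm_natCast]
    exact mul_le_mul (by exact_mod_cast hG v) (hM v hMv).le (norm_nonneg _) (by positivity)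
  rw [LipTree.deriv_bshift_eq hN f v hNv]
  refine (norm_add_le _ _).trans_lt ?_
  have h4 := norm_sub_le (∑ w ∈ (T.locFin v).toFinset, T.deriv f w)
    (∑ u ∈ (T.locFin (T.par v)).toFinset, T.deriv f u)
  linarith
end

section
/- Let T be a rooted, countably infinite, locally finite tree which is homogeneous by sectors at the level 1. Then the operator norm of the backward shift B on 𝓛 equals max{ 2γ(o), Λ }, where Λ = sup{ γ(v) + γ(par(v)) − 1 + |γ(v) − 1| + |γ(v) − γ(par(v))|·|v| : v ∈ T, v ≠ o }. -/
/-!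
Write `D = f'`. For `v ≠ o` with parent `u`, expanding `f` at the children of `v` and of `u`
gives the identity (`deriv_bshift`)

`(Bf)'(v) = (γ(v) - γ(u)) f(u) + (γ(v) - 1) D(v) + ∑_{w child of v} D(w) - ∑_{w sibling of v} D(w)`,

where the siblings of `v` exclude `v` itself. If `‖f‖ ≤ 1` then `|D| ≤ 1` and `|f(u)| ≤ |u| + 1 = |v|`,
which bounds `|(Bf)'(v)|` by the `v`-term of `Λ`; likewise `(Bf)'(o)` is a sum of `γ(o)` values of
modulus at most `2`. The bounds are sharp, because any function `D` is the derivative of its sum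
along the paths to the root (`antideriv`), and the values of `D` on the path to `u`, at `v`, at the
children of `v` and at the siblings of `v` can be given independent signs.
-/

open scoped ENNReal NNReal

namespace LipTree

variable (T : LipTree)

/-- The finset of children of `v`, in the form used by `gamma` and `bshift`. -/
noncomputable def childFinset (v : T.V) : Finset T.V := (T.locFin v).toFinset

/-- The `v`-term of the supremum `Λ`. -/
noncomputable def lambdaTerm (v : T.V) : ℕ :=
  T.gamma v + T.gamma (T.par v) - 1
    + ((T.gamma v : ℤ) - 1).natAbs
    + ((T.gamma v : ℤ) - (T.gamma (T.par v) : ℤ)).natAbs * T.depth v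

/-- The function with derivative `g`: the sum of `g` over the path from `x` to the root. -/
noncomputable def antideriv (g : T.V → ℂ) (x : T.V) : ℂ :=
  ∑ k ∈ Finset.range (T.depth x + 1), g (T.par^[k] x)

variable {T}

lemma mem_childFinset {v w : T.V} : w ∈ T.childFinset v ↔ w ≠ T.root ∧ T.par w = v := by
  simp [childFinset]

lemma card_childFinset (v : T.V) : (T.childFinset v).card = T.gamma v := rfl

lemma bshift_apply (f : T.V → ℂ) (v : T.V) :
    T.bshift f v = ∑ w ∈ T.childFinset v, f w := rfl

lemma deriv_root (f : T.V → ℂ) : T.deriv f T.root = f T.root := by simp [deriv]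

lemma deriv_of_ne (f : T.V → ℂ) {v : T.V} (hv : v ≠ T.root) :
    T.deriv f v = f v - f (T.par v) := by simp [deriv, hv]

lemma eq_root_of_depth {v : T.V} (h : T.depth v = 0) : v = T.root := by
  by_contra hv
  have := T.depth_par v hv
  omega

lemma depth_iterate_le (v : T.V) (k : ℕ) : T.depth (T.par^[k] v) ≤ T.depth v := by
  induction k generalizing v with
  | zero => simp
  | succ k ih =>
    rw [Function.iterate_succ_apply]
    refine (ih _).trans ?_
    by_cases hv : v = T.root
    · subst hv; rw [T.par_root]
    · have := T.depth_par v hv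
      omega

lemma lnorm_le_one_iff {f : T.V → ℂ} : T.lnorm f ≤ 1 ↔ ∀ v, ‖T.deriv f v‖ ≤ 1 := by
  rw [lnorm, iSup_le_iff]
  refine forall_congr' fun v => ?_
  rw [← ENNReal.coe_one, ENNReal.coe_le_coe, ← NNReal.coe_le_coe]
  simp

lemma norm_le_depth {f : T.V → ℂ} (hf : ∀ v, ‖T.deriv f v‖ ≤ 1) (v : T.V) :
    ‖f v‖ ≤ T.depth v + 1 := by
  induction hn : T.depth v generalizing v with
  | zero =>
    obtain rfl := eq_root_of_depth hn
    simpa [deriv_root] using hf T.root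
  | succ n ih =>
    have hv : v ≠ T.root := by
      rintro rfl
      rw [T.depth_root] at hn
      omega
    have h1 := T.depth_par v hv
    have h2 := ih (T.par v) (by omega)
    have h3 := hf v
    rw [deriv_of_ne f hv] at h3
    have h4 := norm_add_le (f v - f (T.par v)) (f (T.par v))
    rw [sub_add_cancel] at h4
    push_cast
    linarith

lemma deriv_antideriv (g : T.V → ℂ) (v : T.V) : T.deriv (T.antideriv g) v = g v := by
  by_cases hv : v = T.root
  · subst hv
    simp [deriv_root, antideriv, T.depth_root]
  · rw [deriv_of_ne _ hv, antideriv, antideriv, Finset.sum_range_succ', T.depth_par v hv]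
    simp [Function.iterate_succ_apply]

lemma antideriv_eq_of_const {g : T.V → ℂ} {c : ℂ} {v : T.V}
    (h : ∀ x, T.depth x ≤ T.depth v → g x = c) :
    T.antideriv g v = (T.depth v + 1) * c := by
  rw [antideriv, Finset.sum_congr rfl fun k _ => h _ (depth_iterate_le v k)]
  simp

lemma sum_childFinset (f : T.V → ℂ) (v : T.V) :
    ∑ w ∈ T.childFinset v, f w = T.gamma v * f v + ∑ w ∈ T.childFinset v, T.deriv f w := by
  have : ∀ w ∈ T.childFinset v, f w = f v + T.deriv f w := by
    intro w hw
    obtain ⟨h1, h2⟩ := mem_childFinset.1 hw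
    rw [deriv_of_ne f h1, h2]
    ring
  rw [Finset.sum_congr rfl this, Finset.sum_add_distrib]
  simp [card_childFinset]

open Classical in
/-- The derivative of `Bf` at `v`, written in terms of `f (par v)` and of values of `f'` at
pairwise distinct vertices off the path from the root to `par v`. -/
lemma deriv_bshift (f : T.V → ℂ) {v : T.V} (hv : v ≠ T.root) :
    T.deriv (T.bshift f) v =
      (((T.gamma v : ℤ) - (T.gamma (T.par v) : ℤ) : ℤ) : ℂ) * f (T.par v)
      + (((T.gamma v : ℤ) - 1 : ℤ) : ℂ) * T.deriv f v
      + ∑ w ∈ T.childFinset v, T.deriv f w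
      - ∑ w ∈ (T.childFinset (T.par v)).erase v, T.deriv f w := by
  have hm : v ∈ T.childFinset (T.par v) := mem_childFinset.2 ⟨hv, rfl⟩
  rw [deriv_of_ne _ hv, bshift_apply, bshift_apply, sum_childFinset, sum_childFinset f (T.par v),
    ← Finset.add_sum_erase _ _ hm, deriv_of_ne f hv]
  push_cast
  ring

open Classical in
lemma card_erase_siblings {v : T.V} (hv : v ≠ T.root) :
    ((T.childFinset (T.par v)).erase v).card + 1 = T.gamma (T.par v) :=
  Finset.card_erase_add_one (mem_childFinset.2 ⟨hv, rfl⟩)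

open Classical in
/-- The truncated subtraction in `lambdaTerm` is harmless, as `par v` has the child `v`. -/
lemma lambdaTerm_eq {v : T.V} (hv : v ≠ T.root) :
    T.lambdaTerm v = ((T.gamma v : ℤ) - (T.gamma (T.par v) : ℤ)).natAbs * T.depth v
      + ((T.gamma v : ℤ) - 1).natAbs + T.gamma v
      + ((T.childFinset (T.par v)).erase v).card := by
  have := card_erase_siblings hv
  rw [lambdaTerm]
  omega

lemma norm_deriv_bshift_le {f : T.V → ℂ} (hf : ∀ v, ‖T.deriv f v‖ ≤ 1) {v : T.V}
    (hv : v ≠ T.root) : ‖T.deriv (T.bshift f) v‖ ≤ T.lambdaTerm v := by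
  classical
  have hsum : ∀ s : Finset T.V, ‖∑ w ∈ s, T.deriv f w‖ ≤ s.card := fun s => by
    simpa using norm_sum_le_of_le s fun w _ => hf w
  have hu : ‖f (T.par v)‖ ≤ T.depth v := by
    have := norm_le_depth hf (T.par v)
    rw [T.depth_par v hv]
    exact_mod_cast this
  have hint : ∀ a : ℤ, ‖(a : ℂ)‖ = a.natAbs := fun a => by
    rw [Complex.norm_intCast, Nat.cast_natAbs, Int.cast_abs]
  rw [deriv_bshift f hv, lambdaTerm_eq hv]
  refine (norm_sub_le _ _).trans ?_
  simp only [Nat.cast_add, Nat.cast_mul]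
  refine add_le_add ((norm_add_le _ _).trans (add_le_add ((norm_add_le _ _).trans
    (add_le_add ?_ ?_)) (hsum _))) (hsum _)
  · rw [norm_mul, hint]
    gcongr
  · rw [norm_mul, hint]
    exact mul_le_of_le_one_right (Nat.cast_nonneg _) (hf v)

lemma norm_deriv_bshift_root_le {f : T.V → ℂ} (hf : ∀ v, ‖T.deriv f v‖ ≤ 1) :
    ‖T.deriv (T.bshift f) T.root‖ ≤ (2 * T.gamma T.root : ℕ) := by
  have : ∀ w ∈ T.childFinset T.root, ‖f w‖ ≤ 2 := by
    intro w hw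
    obtain ⟨h1, h2⟩ := mem_childFinset.1 hw
    have := norm_le_depth hf w
    rw [T.depth_par w h1, h2, T.depth_root] at this
    norm_num at this
    exact this
  rw [deriv_root, bshift_apply]
  refine (norm_sum_le_of_le _ this).trans (le_of_eq ?_)
  simp [card_childFinset, mul_comm]

lemma exists_sign (a : ℤ) : ∃ c : ℂ, ‖c‖ = 1 ∧ (a : ℂ) * c = a.natAbs := by
  rcases Int.natAbs_eq a with h | h
  · refine ⟨1, by simp, ?_⟩
    rw [mul_one]
    simpa only [Int.cast_natCast] using congrArg (Int.cast : ℤ → ℂ) h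
  · refine ⟨-1, by simp, ?_⟩
    have := congrArg (Int.cast : ℤ → ℂ) h
    rw [Int.cast_neg, Int.cast_natCast] at this
    rw [mul_neg_one, neg_eq_iff_eq_neg, ← this]

lemma exists_extremal {v : T.V} (hv : v ≠ T.root) :
    ∃ f : T.V → ℂ, (∀ x, ‖T.deriv f x‖ ≤ 1) ∧ T.deriv (T.bshift f) v = T.lambdaTerm v := by
  classical
  obtain ⟨ε, hε, hε'⟩ := exists_sign ((T.gamma v : ℤ) - (T.gamma (T.par v) : ℤ))
  obtain ⟨δ, hδ, hδ'⟩ := exists_sign ((T.gamma v : ℤ) - 1)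
  have hd := T.depth_par v hv
  -- `ε` above the level of `v`, `δ` at `v`, `1` at the children of `v`, `-1` at its siblings
  let g : T.V → ℂ := fun x => if x = v then δ else if T.depth x < T.depth v then ε else
    if T.par x = v then 1 else -1
  have hg : ∀ x, ‖g x‖ ≤ 1 := fun x => by
    dsimp only [g]
    split_ifs <;> simp [hε, hδ]
  refine ⟨T.antideriv g, fun x => by rw [deriv_antideriv]; exact hg x, ?_⟩
  have hgv : g v = δ := by simp [g]
  have hu : T.antideriv g (T.par v) = T.depth v * ε := by
    rw [antideriv_eq_of_const (c := ε), hd]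
    · push_cast; rfl
    · intro x hx
      have h1 : x ≠ v := by rintro rfl; omega
      have h2 : T.depth x < T.depth v := by omega
      simp [g, h1, h2]
  have hc : ∀ w ∈ T.childFinset v, g w = 1 := by
    intro w hw
    obtain ⟨h1, h2⟩ := mem_childFinset.1 hw
    have h3 := T.depth_par w h1
    rw [h2] at h3
    have h4 : w ≠ v := by rintro rfl; omega
    have h5 : ¬ T.depth w < T.depth v := by omega
    simp [g, h2, h4, h5]
  have hs : ∀ w ∈ (T.childFinset (T.par v)).erase v, g w = -1 := by
    intro w hw
    obtain ⟨h4, hw⟩ := Finset.mem_erase.1 hw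
    obtain ⟨h1, h2⟩ := mem_childFinset.1 hw
    have h3 := T.depth_par w h1
    rw [h2] at h3
    have h5 : ¬ T.depth w < T.depth v := by omega
    have h6 : T.par w ≠ v := by
      intro h
      rw [h2] at h
      rw [h] at hd
      omega
    simp [g, h4, h5, h6]
  rw [deriv_bshift _ hv, lambdaTerm_eq hv]
  simp only [deriv_antideriv]
  rw [Finset.sum_congr rfl hc, Finset.sum_congr rfl hs, hu, hgv, hδ', mul_left_comm, hε']
  simp only [Finset.sum_const, card_childFinset, nsmul_eq_mul]
  simp only [Nat.cast_add, Nat.cast_mul]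
  ring

lemma exists_extremal_root :
    ∃ f : T.V → ℂ, (∀ x, ‖T.deriv f x‖ ≤ 1) ∧
      T.deriv (T.bshift f) T.root = (2 * T.gamma T.root : ℕ) := by
  refine ⟨T.antideriv fun _ => 1, fun x => by simp [deriv_antideriv], ?_⟩
  have : ∀ w ∈ T.childFinset T.root, T.antideriv (fun _ => 1) w = 2 := by
    intro w hw
    obtain ⟨h1, h2⟩ := mem_childFinset.1 hw
    rw [antideriv_eq_of_const (c := 1) (fun _ _ => rfl), T.depth_par w h1, h2, T.depth_root]
    norm_num
  rw [deriv_root, bshift_apply, Finset.sum_congr rfl this]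
  simp [card_childFinset, mul_comm]

lemma coe_nnnorm_le_natCast {z : ℂ} {n : ℕ} (h : ‖z‖ ≤ n) : (‖z‖₊ : ℝ≥0∞) ≤ n := by
  have : ‖z‖₊ ≤ (n : ℝ≥0) := by
    rw [← NNReal.coe_le_coe]
    simpa using h
  exact_mod_cast this

lemma natCast_le_opNormB {f : T.V → ℂ} (hf : ∀ x, ‖T.deriv f x‖ ≤ 1) {v : T.V} {n : ℕ}
    (h : T.deriv (T.bshift f) v = n) : (n : ℝ≥0∞) ≤ T.opNormB := by
  have h1 : (n : ℝ≥0∞) = (‖T.deriv (T.bshift f) v‖₊ : ℝ≥0∞) := by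
    rw [h]
    simp
  rw [h1]
  exact (le_iSup (fun v => (‖T.deriv (T.bshift f) v‖₊ : ℝ≥0∞)) v).trans
    (le_iSup₂ (f := fun (f : T.V → ℂ) (_ : f ∈ {f : T.V → ℂ | T.lnorm f ≤ 1}) =>
      T.lnorm (T.bshift f)) f (lnorm_le_one_iff.2 hf))

end LipTree

/-- if `T` is homogeneous by sectors at level `1`, then
`‖B‖ = max{2γ(o), Λ}`. -/
theorem opNormB_eq_of_homBySectors_one (T : LipTree) (h : T.HomBySectors 1) :
    T.opNormB = max (2 * (T.gamma T.root : ℝ≥0∞)) T.Lambda := by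
  have hroot : 2 * (T.gamma T.root : ℝ≥0∞) = ((2 * T.gamma T.root : ℕ) : ℝ≥0∞) := by
    push_cast; rfl
  rw [hroot]
  apply le_antisymm
  · refine iSup₂_le fun f hf => iSup_le fun v => ?_
    have hf' := LipTree.lnorm_le_one_iff.1 hf
    by_cases hv : v = T.root
    · subst hv
      exact le_max_of_le_left
        (LipTree.coe_nnnorm_le_natCast (LipTree.norm_deriv_bshift_root_le hf'))
    · refine le_max_of_le_right
        ((LipTree.coe_nnnorm_le_natCast (LipTree.norm_deriv_bshift_le hf' hv)).trans ?_)
      exact le_iSup₂ (f := fun (v : T.V) (_ : v ∈ {v : T.V | v ≠ T.root}) =>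
        (T.lambdaTerm v : ℝ≥0∞)) v hv
  · refine max_le ?_ (iSup₂_le fun v hv => ?_)
    · obtain ⟨f, hf, hf'⟩ := LipTree.exists_extremal_root (T := T)
      exact LipTree.natCast_le_opNormB hf hf'
    · obtain ⟨f, hf, hf'⟩ := LipTree.exists_extremal hv
      exact LipTree.natCast_le_opNormB hf hf'
end
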